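/- arXiv:math/0407326 — 3 statements merged into one kernel-verified Lean document; each statement's English description precedes it below -/
import Mathlib

section
/- The Riordan number γ_n is even if and only if there exists m ∈ C with n = 2m − 1. -/
/-- The Motzkin numbers `M n = ∑_k C(n, 2k) ⬝ Catalan k`. -/
def motzkin (n : ℕ) : ℕ := ∑ k ∈ Finset.range (n + 1), n.choose (2 * k) * catalan k

/-- The Riordan numbers: `γ 0 = 1` and `γ (n+1) = M n - γ n`. -/
def riordan : ℕ → ℤ
  | 0 => 1
  | n + 1 => (motzkin n : ℤ) - riordan n

/-- The set `C = {1, 3, 4, 5, 7, 9, 11, 12, …}` of block lengths of the Thue–Morse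
sequence: a positive integer `m` belongs to `C` iff it is not the case that `m` is
even with `m / 2 ∈ C`;  `0 ∉ C`. -/
def inC (m : ℕ) : Bool :=
  if h : m = 0 then false
  else if m % 2 = 0 then !(inC (m / 2)) else true
decreasing_by exact Nat.div_lt_self (Nat.pos_of_ne_zero h) one_lt_two

/-!
Write `c k` for the Catalan numbers. Modulo 2 the Frobenius turns `A = 1 + X A²`, the equation of
the Catalan series, into `A = 1 + X A(X²)`, so the shifted sequence `c (k + 1)` is congruent to
`c 0, 0, c 1, 0, c 2, …`, whose binomial transform is the Motzkin sequence. By Pascal's rule the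
binomial transform of `c` then satisfies the Riordan recurrence, so it is congruent to `γ`.
Lucas' theorem for `C(n, 2k)` gives `M n ≡ γ (n / 2)`, hence `γ (n + 1) ≡ γ (n / 2) + γ n`: all
`γ (2k)` are odd, and `γ (2k + 1)` and `γ k` have opposite parity, which is the recursion
defining `C`.
-/

lemma natCast_choose_prime_mul {R : Type*} [AddMonoidWithOne R] (p : ℕ) [Fact p.Prime]
    [CharP R p] (n k : ℕ) :
    (n.choose (p * k) : R) = (n / p).choose k := by
  have lucas : n.choose (p * k) ≡ (n / p).choose k [MOD p] := by
    simpa [(Fact.out : p.Prime).pos] using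
      Choose.choose_modEq_choose_mod_mul_choose_div_nat (p := p) (n := n) (k := p * k)
  exact CharP.natCast_eq_natCast' R p lucas

section BinomialTransform

open Finset

/-- The binomial transform `n ↦ ∑ₖ C(n, k) b k` of a sequence `b`. -/
def binomialTransform {R : Type*} [Semiring R] (b : ℕ → R) (n : ℕ) : R :=
  ∑ k ∈ range (n + 1), (n.choose k : R) * b k

/-- The sequence `b` with its terms spread out to the multiples of `d`, and zeros in between. -/
def aerate {R : Type*} [Zero R] (d : ℕ) (b : ℕ → R) (k : ℕ) : R :=
  if d ∣ k then b (k / d) else 0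

lemma aerate_natCast {R : Type*} [AddMonoidWithOne R] (d : ℕ) (b : ℕ → ℕ) :
    aerate d (fun k ↦ (b k : R)) = fun k ↦ ((aerate d b k : ℕ) : R) := by
  ext k
  simp [aerate]

variable {R : Type*} [Semiring R]

lemma binomialTransform_succ (b : ℕ → R) (n : ℕ) :
    binomialTransform b (n + 1) =
      binomialTransform b n + binomialTransform (fun k ↦ b (k + 1)) n :=
  sum_choose_succ_mul (fun k _ ↦ b k) n

lemma binomialTransform_natCast (b : ℕ → ℕ) (n : ℕ) :
    binomialTransform (fun k ↦ (b k : R)) n = (binomialTransform b n : ℕ) := by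
  simp [binomialTransform]

lemma binomialTransform_aerate_eq_sum (b : ℕ → R) {d n N : ℕ} (hd : 0 < d) (hN : n / d < N) :
    binomialTransform (aerate d b) n = ∑ k ∈ range N, (n.choose (d * k) : R) * b k := by
  have truncate : ∑ k ∈ range (n / d + 1), (n.choose (d * k) : R) * b k =
      ∑ k ∈ range N, (n.choose (d * k) : R) * b k := by
    refine sum_subset (range_subset_range.mpr hN) fun k _ hk ↦ ?_
    have hnk : n < d * k := by
      rw [mul_comm, ← Nat.div_lt_iff_lt_mul hd]
      simpa [Nat.lt_succ_iff] using hk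
    rw [Nat.choose_eq_zero_of_lt hnk, Nat.cast_zero, zero_mul]
  rw [← truncate, binomialTransform]
  refine (sum_of_injOn (d * ·) (fun _ _ _ _ ↦ Nat.eq_of_mul_eq_mul_left hd) ?_ ?_ ?_).symm
  · intro k hk
    simp only [coe_range, Set.mem_Iio, Nat.lt_succ_iff] at hk ⊢
    exact (Nat.mul_le_mul_left d hk).trans (Nat.mul_div_le n d)
  · intro k hk hk'
    have hdk : ¬ d ∣ k := by
      rintro ⟨j, rfl⟩
      refine hk' ⟨j, ?_, rfl⟩
      simpa [Nat.lt_succ_iff, Nat.le_div_iff_mul_le hd, mul_comm] using hk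
    rw [aerate, if_neg hdk, mul_zero]
  · intro k _
    rw [aerate, if_pos (dvd_mul_right d k), Nat.mul_div_cancel_left k hd]

lemma binomialTransform_aerate_prime (p : ℕ) [Fact p.Prime] [CharP R p] (b : ℕ → R) (n : ℕ) :
    binomialTransform (aerate p b) n = binomialTransform b (n / p) := by
  rw [binomialTransform_aerate_eq_sum b (Fact.out : p.Prime).pos (Nat.lt_succ_self _)]
  simp only [natCast_choose_prime_mul, binomialTransform]

end BinomialTransform

lemma powerSeries_zmod_pow_eq_expand (p : ℕ) [Fact p.Prime] (f : PowerSeries (ZMod p)) :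
    f ^ p = f.expand p (NeZero.ne p) := by
  have h := MvPowerSeries.map_frobenius_expand p (NeZero.ne p) (f := f)
  rw [ZMod.frobenius_zmod, MvPowerSeries.map_id] at h
  exact h.symm

lemma catalan_succ_zmod_two (n : ℕ) :
    (catalan (n + 1) : ZMod 2) = aerate 2 (fun k ↦ (catalan k : ZMod 2)) n := by
  have h := congr_arg (PowerSeries.coeff n)
    (powerSeries_zmod_pow_eq_expand 2 (PowerSeries.mk fun k ↦ (catalan k : ZMod 2)))
  simpa [sq, PowerSeries.coeff_mul, PowerSeries.coeff_expand, catalan_succ', aerate] using h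

lemma motzkin_eq_binomialTransform (n : ℕ) :
    motzkin n = binomialTransform (aerate 2 catalan) n := by
  rw [binomialTransform_aerate_eq_sum catalan two_pos (Nat.lt_succ_of_le (Nat.div_le_self n 2))]
  simp only [motzkin, Nat.cast_id]

lemma motzkin_zmod_two (n : ℕ) :
    (motzkin n : ZMod 2) = binomialTransform (aerate 2 fun k ↦ (catalan k : ZMod 2)) n := by
  rw [aerate_natCast, binomialTransform_natCast, motzkin_eq_binomialTransform]

lemma riordan_zmod_two (n : ℕ) :
    (riordan n : ZMod 2) = binomialTransform (fun k ↦ (catalan k : ZMod 2)) n := by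
  induction n with
  | zero => simp [riordan, binomialTransform]
  | succ n ih =>
    calc (riordan (n + 1) : ZMod 2) = riordan n + motzkin n := by
          rw [riordan, Int.cast_sub, Int.cast_natCast, CharTwo.sub_eq_add, add_comm]
      _ = binomialTransform (fun k ↦ (catalan k : ZMod 2)) (n + 1) := by
          rw [binomialTransform_succ, ih, motzkin_zmod_two, ← funext catalan_succ_zmod_two]

lemma even_motzkin_iff (n : ℕ) : Even (motzkin n) ↔ Even (riordan (n / 2)) := by
  rw [← ZMod.natCast_eq_zero_iff_even, ← ZMod.intCast_eq_zero_iff_even, motzkin_zmod_two,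
    binomialTransform_aerate_prime, riordan_zmod_two]

lemma even_riordan_succ_iff (n : ℕ) :
    Even (riordan (n + 1)) ↔ (Even (riordan (n / 2)) ↔ Even (riordan n)) := by
  rw [riordan, Int.even_sub, Int.even_coe_nat, even_motzkin_iff]

lemma not_even_riordan_two_mul (k : ℕ) : ¬ Even (riordan (2 * k)) := by
  induction k with
  | zero => simp [riordan]
  | succ k ih =>
    have hodd := even_riordan_succ_iff (2 * k)
    have heven := even_riordan_succ_iff (2 * k + 1)
    rw [show 2 * k / 2 = k by omega] at hodd
    rw [show (2 * k + 1) / 2 = k by omega] at heven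
    rw [mul_add_one]
    tauto

lemma even_riordan_two_mul_add_one_iff_not_even (k : ℕ) :
    Even (riordan (2 * k + 1)) ↔ ¬ Even (riordan k) := by
  rw [even_riordan_succ_iff, Nat.mul_div_cancel_left k two_pos,
    iff_false_right (not_even_riordan_two_mul k)]

lemma inC_zero : inC 0 = false := by
  simp [inC]

lemma inC_two_mul_add_one (k : ℕ) : inC (2 * k + 1) = true := by
  rw [inC, dif_neg (Nat.succ_ne_zero _), if_neg (by omega)]

lemma inC_two_mul {m : ℕ} (hm : m ≠ 0) : inC (2 * m) = !inC m := by
  rw [inC, dif_neg (by omega), if_pos (by omega), Nat.mul_div_cancel_left m two_pos]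

lemma even_riordan_two_mul_add_one_iff_inC (k : ℕ) :
    Even (riordan (2 * k + 1)) ↔ inC (k + 1) := by
  induction k using Nat.strong_induction_on with
  | _ k ih =>
    rw [even_riordan_two_mul_add_one_iff_not_even]
    obtain ⟨j, rfl | rfl⟩ := k.even_or_odd'
    · simp only [not_even_riordan_two_mul, not_false_eq_true, inC_two_mul_add_one]
    · rw [ih j (by omega), show 2 * j + 1 + 1 = 2 * (j + 1) by ring, inC_two_mul j.succ_ne_zero]
      simp only [Bool.not_eq_true, Bool.not_eq_true']

/-- The Riordan number `γ n` is even iff `n = 2m - 1` for some `m ∈ C`. -/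
theorem riordan_even_iff (n : ℕ) :
    Even (riordan n) ↔ ∃ m : ℕ, inC m ∧ n = 2 * m - 1 := by
  obtain ⟨k, rfl | rfl⟩ := n.even_or_odd'
  · refine iff_of_false (not_even_riordan_two_mul k) ?_
    rintro ⟨m, hm, hkm⟩
    -- Truncated subtraction makes `m = 0` a solution of `0 = 2 * m - 1`.
    have hm0 : m ≠ 0 := by
      rintro rfl
      simp [inC_zero] at hm
    omega
  · rw [even_riordan_two_mul_add_one_iff_inC]
    constructor
    · exact fun hk ↦ ⟨k + 1, hk, by omega⟩
    · rintro ⟨m, hm, hkm⟩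
      obtain rfl : m = k + 1 := by omega
      exact hm
end

section
/- Let A = {n ∈ ℕ : binomial(2n, n) ≡ 1 (mod 3)}, which is an infinite set, and let a_0 < a_1 < a_2 < ... be its elements in increasing order. Then for every i ∈ ℕ, a_i ≡ t_i (mod 3), where t is the Thue–Morse sequence. -/
/-- The Thue–Morse sequence: `t n` is the parity of the number of ones in the
binary expansion of `n`. -/
def thueMorse (n : ℕ) : ℕ := (Nat.digits 2 n).count 1 % 2

/-!
By Lucas' theorem, `C(2n, n)` is modulo a prime `p` the product of the `C(2d, d)` over the base-`p`
digits `d` of `n`. For `p = 3` the factors are `1, 2, 6` for `d = 0, 1, 2`. Hence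
`C(2n, n) ≡ 1 (mod 3)` exactly when the ternary digits of `n` are those of a binary expansion with
an even number of ones. Reading binary expansions in base `3` preserves both the order and the last
digit, and the `i`-th number with an even number of binary ones is `2 * i + t i`, whose last binary
digit is `t i`.
-/

open Nat (digits ofDigits centralBinom)

section Rebase

variable {b c : ℕ}

/-- The number whose base-`c` expansion is the base-`b` expansion of `n`, for `b ≤ c`. When `c < b`
this is still `∑ dⱼ * c ^ j` over the base-`b` digits `dⱼ`, some of which may exceed `c - 1`. -/
def rebase (b c n : ℕ) : ℕ := ofDigits c (digits b n)

theorem rebase_eq_mod_add_mul_rebase_div (hb : 1 < b) (n : ℕ) :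
    rebase b c n = n % b + c * rebase b c (n / b) := by
  rcases eq_or_ne n 0 with rfl | hn
  · simp [rebase]
  · rw [rebase, Nat.digits_eq_cons_digits_div hb hn, Nat.ofDigits_cons, rebase]

theorem rebase_mod (hb : 1 < b) (hbc : b ≤ c) (n : ℕ) : rebase b c n % c = n % b := by
  rw [rebase_eq_mod_add_mul_rebase_div hb, Nat.add_mul_mod_self_left,
    Nat.mod_eq_of_lt ((Nat.mod_lt n (by lia)).trans_le hbc)]

theorem rebase_strictMono (hb : 1 < b) (hbc : b ≤ c) : StrictMono (rebase b c) := by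
  intro m n hmn
  induction n using Nat.strong_induction_on generalizing m with
  | _ n ih =>
    rw [rebase_eq_mod_add_mul_rebase_div hb m, rebase_eq_mod_add_mul_rebase_div hb n]
    rcases (Nat.div_le_div_right hmn.le : m / b ≤ n / b).eq_or_lt with hdiv | hdiv
    · have hmod : m % b < n % b := by
        rw [← Nat.div_add_mod m b, ← Nat.div_add_mod n b, hdiv] at hmn
        exact Nat.lt_of_add_lt_add_left hmn
      rw [hdiv]
      gcongr
    · have hrec : rebase b c (m / b) < rebase b c (n / b) :=
        ih (n / b) (Nat.div_lt_self (by lia) hb) hdiv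
      calc m % b + c * rebase b c (m / b)
          < c + c * rebase b c (m / b) := by
            gcongr
            exact (Nat.mod_lt m (by lia)).trans_le hbc
        _ = c * (rebase b c (m / b) + 1) := by ring
        _ ≤ c * rebase b c (n / b) := by gcongr; exact hrec
        _ ≤ n % b + c * rebase b c (n / b) := Nat.le_add_left _ _

theorem digits_rebase (hc : 1 < c) {n : ℕ} (hn : ∀ d ∈ digits b n, d < c) :
    digits c (rebase b c n) = digits b n :=
  Nat.digits_ofDigits c hc _ hn fun h ↦
    Nat.getLast_digit_ne_zero b (Nat.digits_ne_nil_iff_ne_zero.mp h)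

theorem digits_rebase_of_le (hb : 1 < b) (hbc : b ≤ c) (n : ℕ) :
    digits c (rebase b c n) = digits b n :=
  digits_rebase (hb.trans_le hbc) fun _ hd ↦ (Nat.digits_lt_base hb hd).trans_le hbc

theorem rebase_rebase (hc : 1 < c) {n : ℕ} (hn : ∀ d ∈ digits b n, d < c) :
    rebase c b (rebase b c n) = n := by
  rw [rebase, digits_rebase hc hn, Nat.ofDigits_digits]

end Rebase

section CentralBinom

variable {p : ℕ} [Fact p.Prime]

theorem prime_dvd_centralBinom_iff_of_lt {d : ℕ} (hd : d < p) :
    p ∣ centralBinom d ↔ p ≤ 2 * d := by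
  have hp : p.Prime := Fact.out
  constructor
  · contrapose!
    intro h hdvd
    exact (hp.factorization_pos_of_dvd (Nat.centralBinom_ne_zero d) hdvd).ne'
      (Nat.factorization_centralBinom_eq_zero_of_two_mul_lt h)
  · intro h
    rw [two_mul] at h
    rw [Nat.centralBinom_eq_two_mul_choose, two_mul]
    exact hp.dvd_choose_add hd hd h

theorem centralBinom_modEq_centralBinom_mod_mul_centralBinom_div (n : ℕ) :
    centralBinom n ≡ centralBinom (n % p) * centralBinom (n / p) [MOD p] := by
  have hmod : n % p < p := Nat.mod_lt n (Fact.out : p.Prime).pos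
  have lucas := Choose.choose_modEq_choose_mod_mul_choose_div_nat (n := 2 * n) (k := n) (p := p)
  rw [← Nat.centralBinom_eq_two_mul_choose] at lucas
  have hn : 2 * n = 2 * (n % p) + p * (2 * (n / p)) := by
    linarith [Nat.div_add_mod n p]
  rcases lt_or_ge (2 * (n % p)) p with hlt | hge
  · rwa [hn, Nat.add_mul_mod_self_left, Nat.mod_eq_of_lt hlt,
      Nat.add_mul_div_left _ _ (by lia), Nat.div_eq_of_lt hlt, zero_add] at lucas
  · -- Doubling the last digit carries, so both sides vanish modulo `p`.
    have hcarry : 2 * n % p < n % p := by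
      rw [hn, Nat.add_mul_mod_self_left, Nat.mod_eq_sub_mod hge, Nat.mod_eq_of_lt] <;> lia
    rw [Nat.choose_eq_zero_of_lt hcarry, zero_mul] at lucas
    refine lucas.trans (Nat.modEq_zero_iff_dvd.mpr ?_).symm
    exact ((prime_dvd_centralBinom_iff_of_lt hmod).mpr hge).mul_right _

theorem centralBinom_modEq_prod_digits (n : ℕ) :
    centralBinom n ≡ ((digits p n).map centralBinom).prod [MOD p] := by
  induction n using Nat.strong_induction_on with
  | _ n ih =>
    have hp : 1 < p := (Fact.out : p.Prime).one_lt
    rcases eq_or_ne n 0 with rfl | hn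
    · simp [Nat.ModEq.refl]
    · rw [Nat.digits_eq_cons_digits_div hp hn, List.map_cons, List.prod_cons]
      exact (centralBinom_modEq_centralBinom_mod_mul_centralBinom_div n).trans
        ((ih (n / p) (Nat.div_lt_self (by lia) hp)).mul_left _)

theorem prime_dvd_centralBinom_iff (n : ℕ) :
    p ∣ centralBinom n ↔ ∃ d ∈ digits p n, p ≤ 2 * d := by
  have hp : p.Prime := Fact.out
  rw [(centralBinom_modEq_prod_digits (p := p) n).dvd_iff dvd_rfl, hp.prime.dvd_prod_iff]
  simp only [List.mem_map, exists_exists_and_eq_and]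
  exact exists_congr fun d ↦ and_congr_right fun hd ↦
    prime_dvd_centralBinom_iff_of_lt (Nat.digits_lt_base hp.one_lt hd)

end CentralBinom

section ModThree

theorem prod_map_centralBinom_eq_two_pow_count_one {L : List ℕ} (hL : ∀ d ∈ L, d < 2) :
    (L.map centralBinom).prod = 2 ^ L.count 1 := by
  induction L with
  | nil => simp
  | cons d L ih =>
    obtain ⟨hd, hL⟩ := List.forall_mem_cons.mp hL
    rw [List.map_cons, List.prod_cons, ih hL]
    interval_cases d
    · simp
    · rw [List.count_cons_self, pow_succ', Nat.centralBinom_eq_two_mul_choose, mul_one,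
        Nat.choose_one_right]

theorem centralBinom_rebase_two_three_modEq (k : ℕ) :
    centralBinom (rebase 2 3 k) ≡ 2 ^ (digits 2 k).count 1 [MOD 3] := by
  have h := centralBinom_modEq_prod_digits (p := 3) (rebase 2 3 k)
  rwa [digits_rebase_of_le one_lt_two (by simp),
    prod_map_centralBinom_eq_two_pow_count_one fun _ ↦ Nat.digits_lt_base one_lt_two] at h

theorem two_pow_mod_three_eq_one_iff (m : ℕ) : 2 ^ m % 3 = 1 ↔ Even m := by
  change 2 ^ m ≡ 1 [MOD 3] ↔ Even m
  rw [← ZMod.natCast_eq_natCast_iff, Nat.cast_pow, Nat.cast_one,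
    show ((2 : ℕ) : ZMod 3) = -1 from rfl]
  exact neg_one_pow_eq_one_iff_even (by decide)

theorem centralBinom_rebase_two_three_mod_three_eq_one_iff (k : ℕ) :
    centralBinom (rebase 2 3 k) % 3 = 1 ↔ thueMorse k = 0 := by
  rw [centralBinom_rebase_two_three_modEq k, two_pow_mod_three_eq_one_iff, Nat.even_iff, thueMorse]

theorem rebase_two_three_rebase_three_two_of_not_dvd {n : ℕ} (hn : ¬ 3 ∣ centralBinom n) :
    rebase 2 3 (rebase 3 2 n) = n := by
  refine rebase_rebase one_lt_two fun d hd ↦ ?_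
  by_contra! h
  exact hn ((prime_dvd_centralBinom_iff n).mpr ⟨d, hd, by lia⟩)

theorem setOf_centralBinom_mod_three_eq_one :
    {n | centralBinom n % 3 = 1} = rebase 2 3 '' {k | thueMorse k = 0} := by
  ext n
  constructor
  · intro (hn : centralBinom n % 3 = 1)
    have hrebase := rebase_two_three_rebase_three_two_of_not_dvd (n := n) (by lia)
    refine ⟨rebase 3 2 n, ?_, hrebase⟩
    rwa [← hrebase, centralBinom_rebase_two_three_mod_three_eq_one_iff] at hn
  · rintro ⟨k, hk, rfl⟩
    exact (centralBinom_rebase_two_three_mod_three_eq_one_iff k).mpr hk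

end ModThree

section Evil

theorem thueMorse_lt_two (n : ℕ) : thueMorse n < 2 := Nat.mod_lt _ two_pos

theorem thueMorse_eq_mod_two_add_thueMorse_div_two (n : ℕ) :
    thueMorse n = (n % 2 + thueMorse (n / 2)) % 2 := by
  rcases eq_or_ne n 0 with rfl | hn
  · simp [thueMorse]
  · rw [thueMorse, thueMorse, Nat.digits_eq_cons_digits_div one_lt_two hn]
    rcases Nat.mod_two_eq_zero_or_one n with h | h <;> rw [h] <;> simp [add_comm]

/-- The `i`-th evil number, where a natural number is evil if it has an even number of binary ones:
of `2 * i` and `2 * i + 1` exactly one is evil, as selected by the last digit `thueMorse i`. -/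
def evil (i : ℕ) : ℕ := 2 * i + thueMorse i

theorem evil_mod_two (i : ℕ) : evil i % 2 = thueMorse i := by
  rw [evil, Nat.mul_add_mod, Nat.mod_eq_of_lt (thueMorse_lt_two i)]

theorem evil_strictMono : StrictMono evil :=
  strictMono_nat_of_lt_succ fun i ↦ by
    have := thueMorse_lt_two i
    rw [evil, evil]
    lia

theorem range_evil : Set.range evil = {k | thueMorse k = 0} := by
  ext k
  constructor
  · rintro ⟨i, rfl⟩
    have hdiv : evil i / 2 = i := by have := thueMorse_lt_two i; rw [evil]; lia
    change thueMorse (evil i) = 0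
    rw [thueMorse_eq_mod_two_add_thueMorse_div_two, evil_mod_two, hdiv]
    lia
  · intro (hk : thueMorse k = 0)
    have hlast : k % 2 = thueMorse (k / 2) := by
      have := thueMorse_lt_two (k / 2)
      rw [thueMorse_eq_mod_two_add_thueMorse_div_two] at hk
      lia
    exact ⟨k / 2, by rw [evil, ← hlast, Nat.div_add_mod]⟩

end Evil

theorem nth_eq_of_strictMono_of_range_eq {P : ℕ → Prop} {f : ℕ → ℕ} (hf : StrictMono f)
    (hrange : Set.range f = {n | P n}) : Nat.nth P = f := by
  have hinf : {n | P n}.Infinite := hrange ▸ Set.infinite_range_of_injective hf.injective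
  exact ((Nat.nth_strictMono hinf).range_inj hf).mp
    ((Nat.range_nth_of_infinite hinf).trans hrange.symm)

/-- The set `A` of `n` with `C(2n, n) ≡ 1 (mod 3)` is infinite, and its `i`-th
element `a_i` (in increasing order) satisfies `a_i ≡ t_i (mod 3)` where `t` is the
Thue–Morse sequence. -/
theorem nth_centralBinom_one_mod_three :
    {n : ℕ | (2 * n).choose n % 3 = 1}.Infinite ∧
    ∀ i : ℕ, Nat.nth (fun n => (2 * n).choose n % 3 = 1) i ≡ thueMorse i [MOD 3] := by
  have hmono : StrictMono (rebase 2 3 ∘ evil) :=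
    (rebase_strictMono one_lt_two (by simp)).comp evil_strictMono
  have hrange : Set.range (rebase 2 3 ∘ evil) = {n | (2 * n).choose n % 3 = 1} := by
    rw [Set.range_comp, range_evil, ← setOf_centralBinom_mod_three_eq_one]
    rfl
  refine ⟨hrange ▸ Set.infinite_range_of_injective hmono.injective, fun i ↦ ?_⟩
  have hmod : rebase 2 3 (evil i) % 3 = thueMorse i :=
    (rebase_mod one_lt_two (by simp) (evil i)).trans (evil_mod_two i)
  rw [nth_eq_of_strictMono_of_range_eq hmono hrange, ← hmod]
  exact (Nat.mod_modEq _ 3).symm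
end

section
/- For every integer n ≥ 1, the central Eulerian number E_n = A(2n−1, n) satisfies: E_n ≡ 1 (mod 3) if n = m + 1 for some m ∈ T(01), and E_n ≡ 0 (mod 3) otherwise. -/
/-- The central Eulerian numbers `E n = A(2n-1, n) = ∑_i (-1)^i (n-i)^{2n-1} C(2n, i)`. -/
def centralEulerian (n : ℕ) : ℤ :=
  ∑ i ∈ Finset.range (n + 1), (-1) ^ i * ((n - i : ℕ) : ℤ) ^ (2 * n - 1) * ((2 * n).choose i)

/-- `T(01)`: the natural numbers all of whose base-3 digits are `0` or `1`. -/
def T01 : Set ℕ := {n | ∀ d ∈ Nat.digits 3 n, d = 0 ∨ d = 1}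

/-!
Write `n = m + 1`. By Fermat's little theorem the odd power `(n - i) ^ (2 * m + 1)` can be replaced
modulo `3` by `n - i`, and the resulting alternating sum telescopes twice to
`(-1) ^ m * centralBinom m`. By Lucas's theorem the latter is, modulo `3`, the product of its values
at the base-`3` digits of `m`; these values are `1`, `-2`, `6`, that is, `1`, `1`, `0`.
-/

open Finset

theorem alternating_sum_range_sub_mul_choose (n k : ℕ) :
    ∑ i ∈ range (k + 2), (-1 : ℤ) ^ i * (k + 1 - i) * (n + 2).choose i = (-1) ^ k * n.choose k := by
  induction k with
  | zero => simp [sum_range_succ]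
  | succ k ih =>
    have split_summand (i : ℕ) :
        (-1 : ℤ) ^ i * (((k + 1 : ℕ) : ℤ) + 1 - i) * (n + 2).choose i =
          (-1) ^ i * (k + 1 - i) * (n + 2).choose i + (-1) ^ i * (n + 2).choose i := by
      push_cast
      ring
    have last_eq_zero : (-1 : ℤ) ^ (k + 2) * (k + 1 - (k + 2 : ℕ)) * (n + 2).choose (k + 2) +
        (-1) ^ (k + 2) * (n + 2).choose (k + 2) = 0 := by
      push_cast
      ring
    calc
      _ = ∑ i ∈ range (k + 2), (-1 : ℤ) ^ i * (k + 1 - i) * (n + 2).choose i +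
          ∑ i ∈ range (k + 2), (-1 : ℤ) ^ i * (n + 2).choose i := by
        rw [sum_congr rfl fun i _ => split_summand i, sum_range_succ, last_eq_zero, add_zero,
          sum_add_distrib]
      _ = (-1) ^ k * n.choose k + (-1) ^ (k + 1) * (n + 1).choose (k + 1) := by
        rw [ih, Int.alternating_sum_range_choose_eq_choose]
      _ = (-1) ^ (k + 1) * n.choose (k + 1) := by
        rw [Nat.choose_succ_succ]
        push_cast
        ring

theorem pow_succ_eq_self_of_card_sub_one_dvd {K : Type*} [Field K] [Fintype K] {k : ℕ}
    (hk : Fintype.card K - 1 ∣ k) (a : K) : a ^ (k + 1) = a := by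
  obtain rfl | ha := eq_or_ne a 0
  · exact zero_pow k.succ_ne_zero
  · obtain ⟨j, rfl⟩ := hk
    rw [pow_succ, pow_mul, FiniteField.pow_card_sub_one_eq_one a ha, one_pow, one_mul]

theorem eq_prod_map_digits {M : Type*} [Monoid M] {b : ℕ} (hb : 1 < b) {f : ℕ → M}
    (hf_zero : f 0 = 1) (hf : ∀ n, f n = f (n % b) * f (n / b)) (n : ℕ) :
    f n = ((Nat.digits b n).map f).prod := by
  induction n using Nat.strong_induction_on with
  | _ n ih =>
    obtain rfl | hn := n.eq_zero_or_pos
    · simpa using hf_zero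
    · rw [Nat.digits_def' hb hn, List.map_cons, List.prod_cons,
        ← ih (n / b) (Nat.div_lt_self hn hb), ← hf]

section Prime

variable {p : ℕ} [Fact p.Prime]

-- The left-hand side is the Eulerian number `A(N + 1, k + 1)` modulo `p`.
theorem alternating_sum_range_sub_pow_mul_choose_zmod {N : ℕ} (hN : p - 1 ∣ N) (k : ℕ) :
    ∑ i ∈ range (k + 2), (-1 : ZMod p) ^ i * (k + 1 - i) ^ (N + 1) * (N + 2).choose i =
      (-1) ^ k * N.choose k := by
  have fermat (a : ZMod p) : a ^ (N + 1) = a :=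
    pow_succ_eq_self_of_card_sub_one_dvd (by rwa [ZMod.card]) a
  simp only [fermat]
  exact_mod_cast congrArg (Int.cast : ℤ → ZMod p) (alternating_sum_range_sub_mul_choose N k)

theorem centralEulerian_succ_zmod {m : ℕ} (hm : p - 1 ∣ 2 * m) :
    (centralEulerian (m + 1) : ZMod p) = (-1) ^ m * m.centralBinom := by
  rw [Nat.centralBinom, ← alternating_sum_range_sub_pow_mul_choose_zmod hm, centralEulerian,
    Int.cast_sum]
  refine sum_congr rfl fun i hi => ?_
  have hi_le : i ≤ m + 1 := mem_range_succ_iff.mp hi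
  have two_mul_succ_sub_one : 2 * (m + 1) - 1 = 2 * m + 1 := by lia
  rw [two_mul_succ_sub_one, Nat.cast_sub hi_le, Nat.mul_succ]
  push_cast
  rfl

theorem dvd_centralBinom_of_le_two_mul_mod {n : ℕ} (h : p ≤ 2 * (n % p)) :
    p ∣ n.centralBinom := by
  have mod_lt : n % p < p := n.mod_lt (Fact.out : p.Prime).pos
  have two_mul_mod : 2 * n % p = 2 * (n % p) - p := by
    rw [← Nat.mul_mod_mod, Nat.mod_eq_sub_mod h, Nat.mod_eq_of_lt (by lia)]
  have carry : 2 * n % p < n % p := by lia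
  rw [← Nat.modEq_zero_iff_dvd, Nat.centralBinom]
  simpa [Nat.choose_eq_zero_of_lt carry] using
    Choose.choose_modEq_choose_mod_mul_choose_div_nat (n := 2 * n) (k := n) (p := p)

theorem centralBinom_modEq_mod_mul_div (n : ℕ) :
    n.centralBinom ≡ (n % p).centralBinom * (n / p).centralBinom [MOD p] := by
  obtain h | h := lt_or_ge (2 * (n % p)) p
  · have two_mul_eq : 2 * n = 2 * (n % p) + p * (2 * (n / p)) := by
      nth_rw 1 [← Nat.mod_add_div n p]
      ring
    have two_mul_mod : 2 * n % p = 2 * (n % p) := by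
      rw [two_mul_eq, Nat.add_mul_mod_self_left, Nat.mod_eq_of_lt h]
    have two_mul_div : 2 * n / p = 2 * (n / p) := by
      rw [two_mul_eq, Nat.add_mul_div_left _ _ (Fact.out : p.Prime).pos, Nat.div_eq_of_lt h,
        zero_add]
    simpa only [Nat.centralBinom, two_mul_mod, two_mul_div] using
      Choose.choose_modEq_choose_mod_mul_choose_div_nat (n := 2 * n) (k := n) (p := p)
  · have dvd_left : p ∣ n.centralBinom := dvd_centralBinom_of_le_two_mul_mod h
    have dvd_right : p ∣ (n % p).centralBinom :=
      dvd_centralBinom_of_le_two_mul_mod (by rwa [Nat.mod_mod])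
    exact (Nat.modEq_zero_iff_dvd.mpr dvd_left).trans
      (Nat.modEq_zero_iff_dvd.mpr (dvd_right.mul_right _)).symm

theorem neg_one_pow_mul_centralBinom_eq_prod_digits (n : ℕ) :
    (-1 : ZMod p) ^ n * n.centralBinom =
      ((Nat.digits p n).map fun d => (-1 : ZMod p) ^ d * d.centralBinom).prod := by
  refine eq_prod_map_digits (f := fun d => (-1 : ZMod p) ^ d * d.centralBinom)
    (Fact.out : p.Prime).one_lt (by simp) (fun n => ?_) n
  have sign : (-1 : ZMod p) ^ n = (-1) ^ (n % p) * (-1) ^ (n / p) := by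
    nth_rw 1 [← Nat.mod_add_div n p]
    rw [pow_add, pow_mul, ZMod.pow_card]
  have lucas : (n.centralBinom : ZMod p) = (n % p).centralBinom * (n / p).centralBinom := by
    exact_mod_cast (ZMod.natCast_eq_natCast_iff _ _ p).mpr (centralBinom_modEq_mod_mul_div n)
  rw [sign, lucas, mul_mul_mul_comm]

end Prime

theorem neg_one_pow_mul_centralBinom_zmod_three_of_mem {m : ℕ} (hm : m ∈ T01) :
    (-1 : ZMod 3) ^ m * m.centralBinom = 1 := by
  rw [neg_one_pow_mul_centralBinom_eq_prod_digits]
  refine List.prod_eq_one (List.forall_mem_map.mpr fun d hd => ?_)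
  obtain rfl | rfl := hm d hd <;> decide

theorem neg_one_pow_mul_centralBinom_zmod_three_of_notMem {m : ℕ} (hm : m ∉ T01) :
    (-1 : ZMod 3) ^ m * m.centralBinom = 0 := by
  have two_mem : 2 ∈ Nat.digits 3 m := by
    simp only [T01, Set.mem_ofPred_eq, not_forall] at hm
    obtain ⟨d, hd, hd_ne⟩ := hm
    have hd_lt : d < 3 := Nat.digits_lt_base (by norm_num) hd
    obtain rfl : d = 2 := by lia
    exact hd
  rw [neg_one_pow_mul_centralBinom_eq_prod_digits]
  exact List.prod_eq_zero (List.mem_map.mpr ⟨2, two_mem, by decide⟩)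

/-- Central Eulerian numbers mod 3: for `n ≥ 1`, `E n ≡ 1 (mod 3)` if `n = m + 1`
for some `m ∈ T(01)`, and `E n ≡ 0 (mod 3)` otherwise. -/
theorem centralEulerian_mod_three (n : ℕ) (hn : 1 ≤ n) :
    ((∃ m ∈ T01, n = m + 1) → centralEulerian n ≡ 1 [ZMOD 3]) ∧
    (¬ (∃ m ∈ T01, n = m + 1) → centralEulerian n ≡ 0 [ZMOD 3]) := by
  obtain ⟨m, rfl⟩ := Nat.exists_eq_add_of_le' hn
  have reduction : (centralEulerian (m + 1) : ZMod 3) = (-1) ^ m * m.centralBinom :=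
    centralEulerian_succ_zmod (dvd_mul_right 2 m)
  constructor
  · rintro ⟨m', hm', hmm'⟩
    obtain rfl : m = m' := Nat.succ_injective hmm'
    refine (ZMod.intCast_eq_intCast_iff _ _ 3).mp ?_
    rw [reduction, neg_one_pow_mul_centralBinom_zmod_three_of_mem hm', Int.cast_one]
  · intro hm
    have hm_notMem : m ∉ T01 := fun h => hm ⟨m, h, rfl⟩
    refine (ZMod.intCast_eq_intCast_iff _ _ 3).mp ?_
    rw [reduction, neg_one_pow_mul_centralBinom_zmod_three_of_notMem hm_notMem, Int.cast_zero]
end
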